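/- arXiv:1209.1155 — 2 statements merged into one kernel-verified Lean document; each statement's English description precedes it below -/
import Mathlib

section
/- Let A be a finite abelian group and k a field. Two 2-cocycles ψ₁, ψ₂: A × A → k^× are cohomologous if and only if their associated alternating forms β_i(a,b) = ψ_i(a,b)ψ_i(b,a)⁻¹ agree, provided k is algebraically closed. In particular, the map H²(A, k^×) → Hom(A ∧ A, k^×), [ψ] ↦ β_ψ, is an injective group homomorphism. -/
/-!
Two 2-cocycles are cohomologous iff their quotient `φ` is a coboundary, and they have the same
alternating form iff `φ` is symmetric. If `φ` is symmetric, then the extension of `A` by `M` that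
it defines is a commutative group; a divisible group `M` is injective, so the inclusion of `M` has
a retraction `ρ`, and evaluating `ρ` on the canonical section of the extension exhibits `φ` as a
coboundary.
-/

section Divisible

instance instDivisibleByAdditiveInt {M : Type*} [Group M] [RootableBy M ℤ] :
    DivisibleBy (Additive M) ℤ where
  div x n := .ofMul (RootableBy.root x.toMul n)
  div_zero x := RootableBy.root_zero x.toMul
  div_cancel x hn := RootableBy.root_cancel x.toMul hn

theorem exists_monoidHom_comp_eq_of_rootableBy {G H M : Type*} [CommGroup G] [CommGroup H]
    [CommGroup M] [RootableBy M ℤ] (f : G →* H) (hf : Function.Injective f) (g : G →* M) :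
    ∃ h : H →* M, h.comp f = g := by
  obtain ⟨h, hh⟩ := (Module.Baer.of_divisible (Additive M)).extension_property_addMonoidHom
    f.toAdditive hf g.toAdditive
  exact ⟨h.toMultiplicative, MonoidHom.toAdditive.injective hh⟩

theorem surjective_pow_units_of_isAlgClosed {k : Type*} [Field k] [IsAlgClosed k] {n : ℕ}
    (hn : n ≠ 0) : Function.Surjective fun x : kˣ => x ^ n := by
  intro u
  obtain ⟨x, hx⟩ := IsAlgClosed.exists_pow_nat_eq (u : k) hn.pos
  obtain ⟨v, rfl⟩ : IsUnit x := (isUnit_pow_iff hn).1 (hx ▸ u.isUnit)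
  exact ⟨v, Units.ext hx⟩

noncomputable instance instRootableByUnitsInt {k : Type*} [Field k] [IsAlgClosed k] :
    RootableBy kˣ ℤ :=
  let := rootableByOfPowLeftSurj kˣ ℕ surjective_pow_units_of_isAlgClosed
  Group.rootableByIntOfRootableByNat kˣ

end Divisible

section Cochain

variable {A M : Type*}

/-- The cochain `φ` is the coboundary of some `z : A → M`, for the trivial action of `A` on `M`. -/
def IsCoboundary [Mul A] [Group M] (φ : A → A → M) : Prop :=
  ∃ z : A → M, ∀ a b, φ a b = z a * z b * (z (a * b))⁻¹

/-- The cochains `ψ₁` and `ψ₂` differ by a coboundary, for the trivial action of `A` on `M`. -/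
def Cohomologous [Mul A] [Group M] (ψ₁ ψ₂ : A → A → M) : Prop :=
  ∃ z : A → M, ∀ a b, ψ₁ a b = z a * z b * (z (a * b))⁻¹ * ψ₂ a b

/-- The form `β(a, b) = ψ(a, b) ψ(b, a)⁻¹` attached to a cochain `ψ`; it is an alternating
bicharacter when `ψ` is a cocycle on a commutative group. -/
def alternatingForm [Group M] (ψ : A → A → M) (a b : A) : M :=
  ψ a b * (ψ b a)⁻¹

theorem IsCoboundary.symm [CommMagma A] [CommGroup M] {φ : A → A → M} (hφ : IsCoboundary φ)
    (a b : A) : φ a b = φ b a := by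
  obtain ⟨z, hz⟩ := hφ
  rw [hz, hz, mul_comm a, mul_comm (z a)]

theorem cohomologous_iff_isCoboundary_div [Mul A] [Group M] {ψ₁ ψ₂ : A → A → M} :
    Cohomologous ψ₁ ψ₂ ↔ IsCoboundary (ψ₁ / ψ₂) := by
  simp only [Cohomologous, IsCoboundary, Pi.div_apply, div_eq_iff_eq_mul]

theorem alternatingForm_eq_iff_div_symm [CommGroup M] {ψ₁ ψ₂ : A → A → M} :
    alternatingForm ψ₁ = alternatingForm ψ₂ ↔ ∀ a b, (ψ₁ / ψ₂) a b = (ψ₁ / ψ₂) b a := by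
  simp only [funext_iff, alternatingForm, ← div_eq_mul_inv, Pi.div_apply]
  exact forall₂_congr fun a b => div_eq_div_iff_div_eq_div

end Cochain

/-- A 2-cocycle on `A` with values in `M`, for the trivial action of `A` on `M`; it need not be
normalized. -/
structure TwoCocycle (A M : Type*) [Mul A] [Mul M] where
  toFun : A → A → M
  cocycle : ∀ a b c, toFun a b * toFun (a * b) c = toFun b c * toFun a (b * c)

namespace TwoCocycle

variable {A M : Type*}

instance [Mul A] [Mul M] : CoeFun (TwoCocycle A M) fun _ => A → A → M := ⟨toFun⟩

instance [Mul A] [CommGroup M] : Div (TwoCocycle A M) where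
  div ψ₁ ψ₂ :=
    { toFun := ψ₁ / ψ₂
      cocycle := fun a b c => by
        simp only [Pi.div_apply, div_mul_div_comm, ψ₁.cocycle, ψ₂.cocycle] }

theorem map_one_left [MulOneClass A] [Mul M] [IsRightCancelMul M] (φ : TwoCocycle A M) (a : A) :
    φ 1 a = φ 1 1 := by
  simpa using (φ.cocycle 1 1 a).symm

/-- The central extension of `A` by `M` defined by the cocycle `φ`: the set `M × A` with
multiplication `(m, a) (n, b) = (m n φ(a, b), a b)`. -/
@[ext]
structure Extension [Mul A] [Mul M] (φ : TwoCocycle A M) where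
  left : M
  right : A

namespace Extension

section Group

variable [Group A] [CommGroup M] (φ : TwoCocycle A M)

instance : Mul φ.Extension where
  mul x y := ⟨x.left * y.left * φ x.right y.right, x.right * y.right⟩

-- Since `φ` need not be normalized, the neutral element is not `(1, 1)`.
instance : One φ.Extension where
  one := ⟨(φ 1 1)⁻¹, 1⟩

instance : Inv φ.Extension where
  inv x := ⟨(φ 1 1)⁻¹ / (x.left * φ x.right⁻¹ x.right), x.right⁻¹⟩

variable {φ}

theorem left_mul (x y : φ.Extension) :
    (x * y).left = x.left * y.left * φ x.right y.right := rfl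

theorem right_mul (x y : φ.Extension) : (x * y).right = x.right * y.right := rfl

theorem left_one : (1 : φ.Extension).left = (φ 1 1)⁻¹ := rfl

theorem right_one : (1 : φ.Extension).right = 1 := rfl

theorem left_inv (x : φ.Extension) :
    x⁻¹.left = (φ 1 1)⁻¹ / (x.left * φ x.right⁻¹ x.right) := rfl

theorem right_inv (x : φ.Extension) : x⁻¹.right = x.right⁻¹ := rfl

protected theorem mul_assoc (x y z : φ.Extension) : x * y * z = x * (y * z) := by
  ext
  · simp only [left_mul, right_mul]
    calc
      _ = x.left * y.left * z.left *
          (φ x.right y.right * φ (x.right * y.right) z.right) := by ac_rfl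
      _ = x.left * y.left * z.left *
          (φ y.right z.right * φ x.right (y.right * z.right)) := by rw [φ.cocycle]
      _ = _ := by ac_rfl
  · simp only [right_mul, mul_assoc]

protected theorem one_mul (x : φ.Extension) : 1 * x = x := by
  ext
  · rw [left_mul, left_one, right_one, φ.map_one_left x.right, inv_mul_cancel_comm]
  · rw [right_mul, right_one, one_mul]

protected theorem inv_mul_cancel (x : φ.Extension) : x⁻¹ * x = 1 := by
  ext
  · rw [left_mul, left_inv, right_inv, mul_assoc, div_mul_cancel, left_one]
  · rw [right_mul, right_inv, inv_mul_cancel, right_one]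

instance : Group φ.Extension :=
  Group.ofLeftAxioms Extension.mul_assoc Extension.one_mul Extension.inv_mul_cancel

variable (φ)

/-- The inclusion of `M` as the kernel of the projection of the extension to `A`; the factor
`φ 1 1` compensates for `φ` not being normalized. -/
def inclusion : M →* φ.Extension :=
  MonoidHom.mk' (fun m => ⟨m / φ 1 1, 1⟩) fun m n => by
    ext
    · rw [left_mul, mul_assoc, div_mul_cancel, div_mul_eq_mul_div]
    · rw [right_mul, one_mul]

/-- The set-theoretic section of the projection of the extension to `A` whose failure to be
multiplicative is measured by `φ`. -/
def canonicalSection (a : A) : φ.Extension := ⟨1, a⟩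

theorem inclusion_injective : Function.Injective (inclusion φ) := fun _ _ h =>
  div_left_injective (congrArg left h)

theorem canonicalSection_mul (a b : A) :
    canonicalSection φ a * canonicalSection φ b =
      inclusion φ (φ a b) * canonicalSection φ (a * b) := by
  ext
  · change 1 * 1 * φ a b = φ a b / φ 1 1 * 1 * φ 1 (a * b)
    rw [φ.map_one_left (a * b), mul_one, mul_one, one_mul, div_mul_cancel]
  · exact (one_mul (a * b)).symm

end Group

/-- The commutative group structure on the extension defined by a symmetric cocycle; not an
instance, since symmetry is not part of `TwoCocycle`. -/
abbrev commGroupOfSymm [CommGroup A] [CommGroup M] {φ : TwoCocycle A M}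
    (hφ : ∀ a b, φ a b = φ b a) : CommGroup φ.Extension where
  mul_comm x y := by
    ext
    · rw [left_mul, left_mul, hφ, mul_comm x.left]
    · rw [right_mul, right_mul, mul_comm]

end Extension

theorem isCoboundary_of_retraction [Group A] [CommGroup M] {φ : TwoCocycle A M}
    (ρ : φ.Extension →* M) (hρ : ρ.comp (Extension.inclusion φ) = MonoidHom.id M) :
    IsCoboundary φ := by
  refine ⟨fun a => ρ (Extension.canonicalSection φ a), fun a b => eq_mul_inv_of_mul_eq ?_⟩
  rw [← map_mul, Extension.canonicalSection_mul, map_mul, ← MonoidHom.comp_apply, hρ,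
    MonoidHom.id_apply]

theorem isCoboundary_iff_symm [CommGroup A] [CommGroup M] [RootableBy M ℤ]
    (φ : TwoCocycle A M) : IsCoboundary φ ↔ ∀ a b, φ a b = φ b a := by
  refine ⟨IsCoboundary.symm, fun hφ => ?_⟩
  let := Extension.commGroupOfSymm hφ
  obtain ⟨ρ, hρ⟩ := exists_monoidHom_comp_eq_of_rootableBy (Extension.inclusion φ)
    (Extension.inclusion_injective φ) (MonoidHom.id M)
  exact isCoboundary_of_retraction ρ hρ

end TwoCocycle

theorem stmt_9_general {A M : Type*} [CommGroup A] [CommGroup M] [RootableBy M ℤ]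
    (ψ₁ ψ₂ : TwoCocycle A M) :
    Cohomologous ψ₁ ψ₂ ↔ alternatingForm ψ₁ = alternatingForm ψ₂ :=
  calc
    Cohomologous ψ₁ ψ₂ ↔ IsCoboundary (ψ₁ / ψ₂) := cohomologous_iff_isCoboundary_div
    _ ↔ ∀ a b, (ψ₁ / ψ₂) a b = (ψ₁ / ψ₂) b a := (ψ₁ / ψ₂).isCoboundary_iff_symm
    _ ↔ alternatingForm ψ₁ = alternatingForm ψ₂ := alternatingForm_eq_iff_div_symm.symm

/-- over an algebraically closed field `k`, two 2-cocycles `ψ₁, ψ₂` on a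
finite abelian group `A` with values in `k^×` are cohomologous if and only if their
associated alternating forms `β_i(a,b) = ψ_i(a,b) ψ_i(b,a)⁻¹` agree.  (Hence the map
`H²(A,k^×) → Hom(A ∧ A, k^×)` is an injective group homomorphism.) -/
theorem stmt_9 {A : Type} [CommGroup A] [Finite A] {k : Type} [Field k] [IsAlgClosed k]
    (ψ₁ ψ₂ : A → A → kˣ)
    (hcoc₁ : ∀ a b c : A, ψ₁ a b * ψ₁ (a * b) c = ψ₁ b c * ψ₁ a (b * c))
    (hcoc₂ : ∀ a b c : A, ψ₂ a b * ψ₂ (a * b) c = ψ₂ b c * ψ₂ a (b * c)) :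
    (∃ z : A → kˣ, ∀ a b : A, ψ₁ a b = z a * z b * (z (a * b))⁻¹ * ψ₂ a b) ↔
    (∀ a b : A, ψ₁ a b * (ψ₁ b a)⁻¹ = ψ₂ a b * (ψ₂ b a)⁻¹) := by
  simpa only [Cohomologous, alternatingForm, funext_iff] using
    stmt_9_general ⟨ψ₁, hcoc₁⟩ ⟨ψ₂, hcoc₂⟩
end

section
/- Let H be a finite-dimensional Hopf algebra over a field k. The Heisenberg double, i.e., the smash product algebra H* # H (where H acts on H* by the left hit action), is a simple algebra; in fact it is isomorphic to the matrix algebra End_k(H*). -/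
open TensorProduct

variable {k : Type} [Field k] {H : Type} [Ring H] [HopfAlgebra k H]

/-- The convolution product on the dual `H* = Hom(H, k)` of a Hopf algebra. -/
noncomputable def convMul (f g : Module.Dual k H) : Module.Dual k H :=
  (LinearMap.mul' k k) ∘ₗ (TensorProduct.map f g) ∘ₗ (Coalgebra.comul (R := k))

/-- The left hit action of `H` on `H*`: `(h ⇀ f)(a) = f(a h)`. -/
noncomputable def hitAction (h : H) (f : Module.Dual k H) : Module.Dual k H :=
  f ∘ₗ (LinearMap.mulRight k h)

/-!
Let `f # h` act on `H*` by `p ↦ f (h ⇀ p)`. If `t` corresponds to `T` under `H* ⊗ H ≃ End H`, then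
`t` acts by precomposition with `x ↦ x₍₂₎ T(x₍₁₎)`, which is the product of `T` and the identity in
the convolution algebra `Hom(H, Hᵐᵒᵖ)`. So the action is faithful as soon as the identity is right
regular in `Hom(H, Hᵐᵒᵖ)`, and a dimension count then gives bijectivity.

The antipode `S`, an algebra map `Hᵐᵒᵖ → H`, induces an algebra map from `Hom(H, Hᵐᵒᵖ)` to
`Hom(H, H)` that sends the identity to the unit `S`. Its image is a finite-dimensional subalgebra
containing `S`, hence also the convolution inverse `id` of `S`. So `S` is surjective, hence
injective, the induced map is injective, and right regularity pulls back along it.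
-/

open Coalgebra HopfAlgebra MulOpposite WithConv

section Antipode

variable {R A B C : Type*} [CommSemiring R]

/-- Postcomposition with an algebra map, as a map of convolution algebras. -/
noncomputable def convPostcomp [Semiring A] [Algebra R A] [Semiring B] [Algebra R B]
    [AddCommMonoid C] [Module R C] [Coalgebra R C] (φ : A →ₐ[R] B) :
    WithConv (C →ₗ[R] A) →ₐ[R] WithConv (C →ₗ[R] B) :=
  .ofLinearMap
    { toFun f := toConv (φ.toLinearMap ∘ₗ f.ofConv)
      map_add' f g := congrArg toConv (LinearMap.comp_add f.ofConv g.ofConv φ.toLinearMap)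
      map_smul' c f := congrArg toConv (LinearMap.comp_smul φ.toLinearMap c f.ofConv) }
    (WithConv.ext (LinearMap.ext fun x ↦ φ.commutes (counit x)))
    (fun f g ↦ congrArg toConv (LinearMap.algHom_comp_convMul_distrib φ f g))

variable [Semiring A] [HopfAlgebra R A]

variable (R A) in
/-- The identity of `A`, as an element of the convolution algebra `Hom(A, Aᵐᵒᵖ)`. -/
noncomputable def convOp : WithConv (A →ₗ[R] Aᵐᵒᵖ) :=
  toConv (opLinearEquiv R).toLinearMap

variable (R A) in
/-- Postcomposition with the antipode `Aᵐᵒᵖ → A`, as a map of convolution algebras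
`Hom(A, Aᵐᵒᵖ) → Hom(A, A)`. -/
noncomputable def convAntipode : WithConv (A →ₗ[R] Aᵐᵒᵖ) →ₐ[R] WithConv (A →ₗ[R] A) :=
  convPostcomp (AlgHom.opComm (antipodeAlgHomOp R A))

theorem convAntipode_apply (f : WithConv (A →ₗ[R] Aᵐᵒᵖ)) (x : A) :
    convAntipode R A f x = antipode R (unop (f x)) := rfl

theorem convAntipode_convOp : convAntipode R A (convOp R A) = toConv (antipode R) := rfl

theorem isUnit_toConv_antipode : IsUnit (toConv (antipode R (A := A))) :=
  ⟨⟨_, _, LinearMap.antipode_mul_id, LinearMap.id_mul_antipode⟩, rfl⟩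

theorem isRightRegular_convOp (antipode_injective : Function.Injective (antipode R (A := A))) :
    IsRightRegular (convOp R A) := by
  intro f g hfg
  have mul_antipode_eq : convAntipode R A f * toConv (antipode R) =
      convAntipode R A g * toConv (antipode R) := by
    simpa only [map_mul, convAntipode_convOp] using congrArg (convAntipode R A) hfg
  have convAntipode_eq := isUnit_toConv_antipode.isRegular.right mul_antipode_eq
  ext x
  refine unop_injective (antipode_injective ?_)
  rw [← convAntipode_apply, ← convAntipode_apply, convAntipode_eq]

end Antipode

section FiniteDimensional

variable {K A : Type*} [Field K] [Ring A]

theorem isUnit_subalgebra_mk [Algebra K A] {S : Subalgebra K A} [FiniteDimensional K S]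
    {a : A} (ha : a ∈ S) (hu : IsUnit a) : IsUnit (⟨a, ha⟩ : S) := by
  have : IsArtinianRing S := .of_finite K S
  refine IsArtinianRing.isUnit_iff_isRightRegular.mpr fun x y hxy ↦ Subtype.ext ?_
  exact hu.isRegular.right (congrArg Subtype.val hxy)

variable [HopfAlgebra K A] [FiniteDimensional K A]

theorem antipode_surjective : Function.Surjective (antipode K (A := A)) := by
  have antipode_mem : toConv (antipode K (A := A)) ∈ (convAntipode K A).range :=
    ⟨convOp K A, convAntipode_convOp⟩
  have : FiniteDimensional K (WithConv (A →ₗ[K] A)) :=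
    .equiv (WithConv.linearEquiv K (A →ₗ[K] A)).symm
  obtain ⟨⟨_, f, rfl⟩, hf⟩ :=
    (isUnit_subalgebra_mk antipode_mem isUnit_toConv_antipode).exists_left_inv
  have convAntipode_eq_id : convAntipode K A f = toConv LinearMap.id :=
    left_inv_eq_right_inv (congrArg Subtype.val hf) LinearMap.antipode_mul_id
  exact fun x ↦ ⟨unop (f x), LinearMap.congr_fun (toConv_injective convAntipode_eq_id) x⟩

theorem antipode_injective : Function.Injective (antipode K (A := A)) :=
  LinearMap.injective_iff_surjective.mpr antipode_surjective

end FiniteDimensional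

theorem isSimpleRing_moduleEnd (K V : Type*) [Field K] [AddCommGroup V] [Module K V]
    [FiniteDimensional K V] [Nontrivial V] : IsSimpleRing (Module.End K V) := by
  let b := Module.finBasis K V
  have : Nonempty (Fin (Module.finrank K V)) := b.index_nonempty
  exact .of_ringEquiv (algEquivMatrix b).symm.toRingEquiv inferInstance

section Dual

theorem convMul_apply_eq_sum {ι : Type*} {x : H} (r : Repr k x ι) (f g : Module.Dual k H) :
    convMul f g x = ∑ i ∈ r.index, f (r.left i) * g (r.right i) :=
  r.convMul_apply (toConv f) (toConv g)

theorem convMul_assoc (f g p : Module.Dual k H) :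
    convMul (convMul f g) p = convMul f (convMul g p) :=
  toConv_injective (mul_assoc (toConv f) (toConv g) (toConv p))

theorem hitAction_mul (h l : H) (p : Module.Dual k H) :
    hitAction (h * l) p = hitAction h (hitAction l p) := by
  ext x
  simp [hitAction, mul_assoc]

theorem hitAction_convMul {ι : Type*} {h : H} (r : Repr k h ι) (g p : Module.Dual k H) :
    hitAction h (convMul g p) =
      ∑ i ∈ r.index, convMul (hitAction (r.left i) g) (hitAction (r.right i) p) := by
  ext x
  calc convMul g p (x * h)
    _ = ∑ j ∈ (ℛ k x).index, ∑ i ∈ r.index,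
          g ((ℛ k x).left j * r.left i) * p ((ℛ k x).right j * r.right i) := by
      rw [convMul_apply_eq_sum ((ℛ k x).mul r)]
      exact Finset.sum_product _ _ _
    _ = ∑ i ∈ r.index, convMul (hitAction (r.left i) g) (hitAction (r.right i) p) x := by
      simp only [convMul_apply_eq_sum (ℛ k x)]
      exact Finset.sum_comm
    _ = _ := (LinearMap.sum_apply _ _ x).symm

/-- `convMul` bundled as a bilinear map: left convolution as a linear map `H* → End H*`. -/
noncomputable def convMulₗ : Module.Dual k H →ₗ[k] Module.End k (Module.Dual k H) :=
  LinearMap.mk₂ k convMul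
    (fun f g p ↦ congrArg ofConv (add_mul (toConv f) (toConv g) (toConv p)))
    (fun c f g ↦ congrArg ofConv (smul_mul_assoc c (toConv f) (toConv g)))
    (fun f g p ↦ congrArg ofConv (mul_add (toConv f) (toConv g) (toConv p)))
    (fun c f g ↦ congrArg ofConv (mul_smul_comm c (toConv f) (toConv g)))

/-- `hitAction` bundled as a linear map `H → End H*`. -/
noncomputable def hitActionₗ : H →ₗ[k] Module.End k (Module.Dual k H) :=
  Module.Dual.transpose ∘ₗ (LinearMap.mul k H).flip

/-- The action of the Heisenberg double `H* # H` on `H*`, in which `f # h` acts by the hit action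
of `h` followed by convolution with `f`. -/
noncomputable def heisenbergAction :
    (Module.Dual k H ⊗[k] H) →ₗ[k] Module.End k (Module.Dual k H) :=
  LinearMap.mul' k _ ∘ₗ TensorProduct.map convMulₗ hitActionₗ

theorem heisenbergAction_tmul (f p : Module.Dual k H) (h : H) :
    heisenbergAction (f ⊗ₜ[k] h) p = convMul f (hitAction h p) := rfl

theorem heisenbergAction_mul {ι : Type*} {h : H} (r : Repr k h ι) (f g : Module.Dual k H) (l : H) :
    heisenbergAction (f ⊗ₜ[k] h) * heisenbergAction (g ⊗ₜ[k] l) =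
      ∑ i ∈ r.index,
        heisenbergAction (convMul f (hitAction (r.left i) g) ⊗ₜ[k] (r.right i * l)) := by
  ext1 p
  calc convMul f (hitAction h (convMul g (hitAction l p)))
    _ = ∑ i ∈ r.index,
          convMul f (convMul (hitAction (r.left i) g) (hitAction (r.right i) (hitAction l p))) := by
      rw [hitAction_convMul r]
      exact map_sum (convMulₗ f) _ _
    _ = _ := by
      simp only [LinearMap.sum_apply, heisenbergAction_tmul, convMul_assoc, hitAction_mul]

theorem heisenbergAction_apply (t : Module.Dual k H ⊗[k] H) (p : Module.Dual k H) (x : H) :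
    heisenbergAction t p x =
      p (unop ((toConv ((opLinearEquiv k).toLinearMap ∘ₗ dualTensorHom k H H t) *
        convOp k H) x)) := by
  induction t with
  | zero => simp
  | add s t hs ht => simp [hs, ht, LinearMap.comp_add, add_mul]
  | tmul f h =>
    rw [heisenbergAction_tmul, convMul_apply_eq_sum (ℛ k x), (ℛ k x).convMul_apply]
    simp [hitAction, convOp]

variable [FiniteDimensional k H]

theorem heisenbergAction_injective :
    Function.Injective (heisenbergAction (k := k) (H := H)) := by
  intro s t hst
  refine (dualTensorHomEquiv k H H).injective ?_
  have mul_convOp_eq :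
      toConv ((opLinearEquiv k).toLinearMap ∘ₗ dualTensorHom k H H s) * convOp k H =
        toConv ((opLinearEquiv k).toLinearMap ∘ₗ dualTensorHom k H H t) * convOp k H := by
    ext x
    refine unop_injective (Module.eval_apply_injective k (LinearMap.ext fun p ↦ ?_))
    rw [Module.Dual.eval_apply, Module.Dual.eval_apply, ← heisenbergAction_apply,
      ← heisenbergAction_apply, hst]
  have op_comp_eq := toConv_injective (isRightRegular_convOp antipode_injective mul_convOp_eq)
  ext x
  simpa using LinearMap.congr_fun op_comp_eq x

theorem heisenbergAction_bijective :
    Function.Bijective (heisenbergAction (k := k) (H := H)) := by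
  have finrank_eq : Module.finrank k (Module.Dual k H ⊗[k] H) =
      Module.finrank k (Module.End k (Module.Dual k H)) := by
    simp [Module.finrank_linearMap, Subspace.dual_finrank_eq]
  exact (LinearMap.linearEquivOfInjective (K := k) (V := Module.Dual k H ⊗[k] H)
    (V₂ := Module.End k (Module.Dual k H)) _ heisenbergAction_injective finrank_eq).bijective

end Dual

/-- for a finite-dimensional Hopf algebra `H`, the Heisenberg double
`H* # H` (with multiplication `(f # h)(g # l) = f (h₍₁₎ ⇀ g) # h₍₂₎ l`) is
isomorphic to the simple algebra `End_k(H*)`; in particular it is simple. -/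
theorem stmt_12 [FiniteDimensional k H] :
    ∃ Φ : (Module.Dual k H ⊗[k] H) →ₗ[k] Module.End k (Module.Dual k H),
      Function.Bijective Φ ∧
      (∀ (f g : Module.Dual k H) (h l : H) (n : ℕ) (a b : Fin n → H),
        Coalgebra.comul (R := k) h = ∑ i, (a i) ⊗ₜ[k] (b i) →
        Φ (f ⊗ₜ h) * Φ (g ⊗ₜ l)
          = ∑ i, Φ ((convMul f (hitAction (a i) g)) ⊗ₜ ((b i) * l))) ∧
      IsSimpleRing (Module.End k (Module.Dual k H)) := by
  have : Nontrivial H := (Bialgebra.counitAlgHom k H).toRingHom.domain_nontrivial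
  refine ⟨heisenbergAction, heisenbergAction_bijective, fun f g h l n a b hab ↦ ?_,
    isSimpleRing_moduleEnd k _⟩
  exact heisenbergAction_mul ⟨Finset.univ, a, b, hab.symm⟩ f g l
end
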